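/- Let K be a field of characteristic 0 and let A = K[x_1,…,x_8]/((x_1^2, x_1x_2, x_1x_3, x_1x_4, x_1x_5) + (x_2,x_3,x_4,x_5)^3). Then A is a Cohen-Macaulay standard graded K-algebra of Krull dimension 3 with h-polynomial h_A(t) = 1 + 5t + 10t^2, the sequence Θ = x_6, x_7, x_8 is a linear system of parameters for A, and for every integer r ≥ 3 the algebra A_Θ^⟨r⟩ does not have the weak Lefschetz property. -/

import Mathlib

open MvPolynomial

set_option synthInstance.maxHeartbeats 1000000
set_option maxHeartbeats 1000000

/-- The ideal `(x₁², x₁x₂, x₁x₃, x₁x₄, x₁x₅) + (x₂,x₃,x₄,x₅)³` of `K[x₁,…,x₈]`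
(variables indexed by `Fin 8`, `x_i` corresponding to the index `i-1`). -/
noncomputable def KMIdeal (K : Type*) [Field K] : Ideal (MvPolynomial (Fin 8) K) :=
  Ideal.span {X 0 * X 0, X 0 * X 1, X 0 * X 2, X 0 * X 3, X 0 * X 4} +
    (Ideal.span {(X 1 : MvPolynomial (Fin 8) K), X 2, X 3, X 4}) ^ 3

/-- The algebra `A = K[x₁,…,x₈]/((x₁²,x₁x₂,x₁x₃,x₁x₄,x₁x₅) + (x₂,x₃,x₄,x₅)³)` of
Remark 2.4 of Kubitzke–Murai. -/
abbrev KMAlgebra (K : Type*) [Field K] : Type _ :=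
  MvPolynomial (Fin 8) K ⧸ KMIdeal K

/-- The standard grading of `KMAlgebra K`: the degree-`i` component is the image of the
homogeneous polynomials of degree `i` under the quotient map. -/
noncomputable def KMGrading (K : Type*) [Field K] : ℕ → Submodule K (KMAlgebra K) :=
  fun i => Submodule.map (Ideal.Quotient.mkₐ K (KMIdeal K)).toLinearMap
    (homogeneousSubmodule (Fin 8) K i)

/-- The sequence `Θ = x₆, x₇, x₈` in `KMAlgebra K`. -/
noncomputable def KMTheta (K : Type*) [Field K] : Fin 3 → KMAlgebra K :=
  ![Ideal.Quotient.mk (KMIdeal K) (X 5), Ideal.Quotient.mk (KMIdeal K) (X 6),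
    Ideal.Quotient.mk (KMIdeal K) (X 7)]

/-- The degree-`i` component of the ideal `(θ₁^r, θ₂^r, θ₃^r) A^⟨r⟩` of the `r`-th Veronese
subalgebra `A^⟨r⟩ = ⊕_i A_{ir}` of `A = KMAlgebra K`, viewed as a `K`-submodule of `A`.
The degree-`i` component of `A_Θ^⟨r⟩` is then `KMGrading K (i*r) ⧸ KMLsopIdealComponent K r i`. -/
noncomputable def KMLsopIdealComponent (K : Type*) [Field K] (r : ℕ) :
    ℕ → Submodule K (KMAlgebra K)
  | 0 => ⊥
  | (i + 1) => ⨆ j : Fin 3,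
      Submodule.map (LinearMap.mulLeft K (KMTheta K j ^ r)) (KMGrading K (i * r))

/-! All statements are read off the decomposition of `A` as a free module over `K[x₆, x₇, x₈]` with
basis the standard monomials `1`, `x₁, …, x₅` and the ten quadrics in `x₂, …, x₅`. Any linear
system of parameters `y₁, y₂, y₃` is the image of `Θ` under the endomorphism of `A` fixing
`x₁, …, x₅` and sending `Θ` to `y`; it is surjective by finiteness, hence bijective since `A` is
Noetherian, so `y` is regular because `Θ` is.

The Lefschetz property of `A_Θ^⟨r⟩` fails from degree `1` to degree `2`. Injectivity fails on
`x₁A ≅ K[x₆, x₇, x₈](-1)`: multiplication by `w` acts there through the image `W` of `w` in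
`K[x₆, x₇, x₈]`, and counting dimensions in degree `2r - 1` gives a nonzero form `f` of degree
`r - 1` with `W f ∈ (x₆ʳ, x₇ʳ, x₈ʳ)`. Surjectivity fails because the degree `2` part is larger
than the degree `1` part. -/

section MonomialIdeals

variable {σ R : Type*} [CommSemiring R]

lemma mem_restrictSupportIdeal {s : Set (σ →₀ ℕ)} {hs : IsUpperSet s} {f : MvPolynomial σ R} :
    f ∈ restrictSupportIdeal R s hs ↔ ∀ m ∈ f.support, m ∈ s :=
  Iff.rfl

lemma monomial_mem_restrictSupportIdeal {s : Set (σ →₀ ℕ)} {hs : IsUpperSet s} {m : σ →₀ ℕ}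
    (hm : m ∈ s) (c : R) : monomial m c ∈ restrictSupportIdeal R s hs :=
  (monomial_mem_restrictSupport R).2 (Or.inl hm)

lemma restrictSupportIdeal_le_iff {s : Set (σ →₀ ℕ)} {hs : IsUpperSet s}
    {J : Ideal (MvPolynomial σ R)} :
    restrictSupportIdeal R s hs ≤ J ↔ ∀ m ∈ s, monomial m (1 : R) ∈ J := by
  refine ⟨fun h m hm => h (monomial_mem_restrictSupportIdeal hm 1), fun h f hf => ?_⟩
  rw [f.as_sum]
  refine J.sum_mem fun m hm => ?_
  rw [← mul_one (coeff m f), ← C_mul_monomial]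
  exact J.mul_mem_left _ (h m (hf hm))

lemma restrictSupportIdeal_sup {s t : Set (σ →₀ ℕ)} (hs : IsUpperSet s) (ht : IsUpperSet t) :
    restrictSupportIdeal R s hs ⊔ restrictSupportIdeal R t ht =
      restrictSupportIdeal R (s ∪ t) (hs.union ht) := by
  refine le_antisymm (sup_le ?_ ?_) ?_
  · exact restrictSupport_mono R Set.subset_union_left
  · exact restrictSupport_mono R Set.subset_union_right
  · exact restrictSupportIdeal_le_iff.2 fun m hm => hm.elim
      (fun hm => Ideal.mem_sup_left (monomial_mem_restrictSupportIdeal hm 1))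
      (fun hm => Ideal.mem_sup_right (monomial_mem_restrictSupportIdeal hm 1))

lemma isUpperSet_exists_ne_zero (T : Set σ) : IsUpperSet {m : σ →₀ ℕ | ∃ i ∈ T, m i ≠ 0} :=
  fun _ _ hle ⟨i, hi, hne⟩ => ⟨i, hi, (hne.bot_lt.trans_le (hle i)).ne'⟩

lemma span_X_image_eq_restrictSupportIdeal (T : Set σ) :
    Ideal.span (X '' T : Set (MvPolynomial σ R)) =
      restrictSupportIdeal R {m | ∃ i ∈ T, m i ≠ 0} (isUpperSet_exists_ne_zero T) :=
  Ideal.ext fun _ => mem_ideal_span_X_image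

lemma isUpperSet_le_sum (S : Finset σ) (n : ℕ) : IsUpperSet {m : σ →₀ ℕ | n ≤ ∑ i ∈ S, m i} :=
  fun _ _ hle hn => hn.trans (Finset.sum_le_sum fun i _ => hle i)

lemma monomial_mem_span_X_image_pow (S : Finset σ) {n : ℕ} {m : σ →₀ ℕ}
    (hn : n ≤ ∑ i ∈ S, m i) : monomial m (1 : R) ∈ Ideal.span (X '' (S : Set σ)) ^ n := by
  classical
  refine Ideal.pow_le_pow_right hn ?_
  have hdvd : ∏ i ∈ S, (X i : MvPolynomial σ R) ^ m i ∣ monomial m 1 := by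
    rw [monomial_eq, C_1, one_mul, Finsupp.prod, ← Finset.prod_filter_ne_one]
    refine Finset.prod_dvd_prod_of_subset _ _ _ fun i hi => Finsupp.mem_support_iff.2 fun h0 => ?_
    exact (Finset.mem_filter.1 hi).2 (by rw [h0, pow_zero])
  refine Ideal.mem_of_dvd _ hdvd ?_
  rw [← Finset.prod_pow_eq_pow_sum]
  exact Ideal.prod_mem_prod fun i hi =>
    Ideal.pow_mem_pow (Ideal.subset_span (Set.mem_image_of_mem X hi)) _

lemma span_X_image_pow_eq_restrictSupportIdeal (S : Finset σ) (n : ℕ) :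
    Ideal.span (X '' (S : Set σ) : Set (MvPolynomial σ R)) ^ n =
      restrictSupportIdeal R {m | n ≤ ∑ i ∈ S, m i} (isUpperSet_le_sum S n) := by
  refine le_antisymm ?_
    (restrictSupportIdeal_le_iff.2 fun m hm => monomial_mem_span_X_image_pow S hm)
  induction n with
  | zero => exact fun f _ m _ => Nat.zero_le _
  | succ n ih =>
    rw [pow_succ, Ideal.mul_le]
    intro f hf g hg m hm
    rw [span_X_image_eq_restrictSupportIdeal] at hg
    have hfg : f * g ∈ restrictSupport R {m | n ≤ ∑ i ∈ S, m i} *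
        restrictSupport R {m | ∃ i ∈ (S : Set σ), m i ≠ 0} := Submodule.mul_mem_mul (ih hf) hg
    rw [← restrictSupport_add] at hfg
    obtain ⟨a, ha, b, ⟨i, hi, hbi⟩, rfl⟩ := hfg hm
    have hb : 1 ≤ ∑ i ∈ S, b i := (Nat.one_le_iff_ne_zero.2 hbi).trans
      (Finset.single_le_sum (fun _ _ => Nat.zero_le _) hi)
    simpa only [Set.mem_ofPred_eq, Finsupp.add_apply, Finset.sum_add_distrib] using add_le_add ha hb

lemma X_mul_mem_restrictSupportIdeal_iff {s : Set (σ →₀ ℕ)} {hs : IsUpperSet s} {k : σ}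
    (hk : ∀ m, Finsupp.single k 1 + m ∈ s → m ∈ s) {f : MvPolynomial σ R} :
    X k * f ∈ restrictSupportIdeal R s hs ↔ f ∈ restrictSupportIdeal R s hs := by
  rw [mem_restrictSupportIdeal, mem_restrictSupportIdeal]
  refine ⟨fun h m hm => hk m (h _ ?_), ?_⟩
  · rwa [mem_support_iff, coeff_X_mul, ← mem_support_iff]
  · exact fun h => Ideal.mul_mem_left _ (X k) (mem_restrictSupportIdeal (hs := hs).2 h)

end MonomialIdeals

section MonomialCounting

lemma finrank_map_mkₐ_restrictSupport {σ R : Type*} [CommRing R] [Nontrivial R]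
    {I : Ideal (MvPolynomial σ R)} {s : Set (σ →₀ ℕ)} {hs : IsUpperSet s}
    (hI : I = restrictSupportIdeal R s hs) (t : Set (σ →₀ ℕ)) :
    Module.finrank R ((restrictSupport R t).map (Ideal.Quotient.mkₐ R I).toLinearMap) =
      (t \ s).ncard := by
  subst hI
  set π := (Ideal.Quotient.mkₐ R (restrictSupportIdeal R s hs)).toLinearMap
  have hker : ∀ f, π f = 0 ↔ f ∈ restrictSupportIdeal R s hs :=
    fun f => Ideal.Quotient.eq_zero_iff_mem
  have hmap : (restrictSupport R t).map π = (restrictSupport R (t \ s)).map π := by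
    refine le_antisymm ?_ (Submodule.map_mono (restrictSupport_mono R Set.sdiff_subset))
    rw [restrictSupport_eq_span R t, Submodule.map_span_le]
    rintro _ ⟨m, hm, rfl⟩
    by_cases hms : m ∈ s
    · rw [(hker _).2 (monomial_mem_restrictSupportIdeal hms 1)]
      exact Submodule.zero_mem _
    · exact Submodule.mem_map_of_mem
        ((monomial_mem_restrictSupport R).2 (Or.inl ⟨hm, hms⟩))
  have hinj : Function.Injective (π.domRestrict (restrictSupport R (t \ s))) := by
    rw [injective_iff_map_eq_zero]
    rintro ⟨f, hf⟩ h0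
    refine Subtype.ext (support_eq_empty.1 (Finset.eq_empty_of_forall_notMem fun m hm => ?_))
    exact (hf hm).2 ((hker f).1 h0 hm)
  rw [hmap, ← LinearMap.range_domRestrict, LinearMap.finrank_range_of_inj hinj,
    Module.finrank_eq_nat_card_basis (basisRestrictSupport R (t \ s)), Nat.card_coe_set_eq]

lemma ncard_degree_eq (σ : Type*) [Fintype σ] (n : ℕ) :
    {m : σ →₀ ℕ | m.degree = n}.ncard = (Fintype.card σ).multichoose n := by
  classical
  rw [← Finset.card_univ, ← Finset.card_finsuppAntidiag_nat_eq_multichoose,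
    ← Set.ncard_coe_finset]
  congr 1
  ext m
  simp [Finset.mem_finsuppAntidiag, Finsupp.degree_eq_sum]

lemma multichoose_three (n : ℕ) : Nat.multichoose 3 n = (n + 2).choose 2 := by
  rw [Nat.multichoose_eq, show 3 + n - 1 = n + 2 by omega]
  exact Nat.choose_symm_of_eq_add rfl

lemma ncard_add_degree_eq (d n : ℕ) :
    {v : Fin 3 →₀ ℕ | d + v.degree = n}.ncard = (n + 2 - d).choose 2 := by
  obtain h | h := le_or_gt d n
  · obtain ⟨k, rfl⟩ := Nat.exists_eq_add_of_le h
    simp only [add_right_inj, ncard_degree_eq, Fintype.card_fin, multichoose_three]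
    congr 1
    omega
  · have hempty : {v : Fin 3 →₀ ℕ | d + v.degree = n} = ∅ :=
      Set.eq_empty_of_forall_notMem fun v hv => (h.trans_le (Nat.le_add_right d v.degree)).ne' hv
    rw [hempty, Set.ncard_empty, Nat.choose_eq_zero_of_lt (by omega)]

lemma ncard_degree_eq_and_castAdd_eq {a b : ℕ} (u : Fin a → ℕ) (n : ℕ) :
    {m : Fin (a + b) →₀ ℕ | m.degree = n ∧ (fun i => m (Fin.castAdd b i)) = u}.ncard =
      {v : Fin b →₀ ℕ | ∑ i, u i + v.degree = n}.ncard := by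
  let append (v : Fin b →₀ ℕ) : Fin (a + b) →₀ ℕ := Finsupp.equivFunOnFinite.symm (Fin.append u v)
  have happend : Function.Injective append := fun v w h => by
    ext j
    simpa [append] using DFunLike.congr_fun h (Fin.natAdd a j)
  rw [← Set.ncard_image_of_injective _ happend]
  congr 1
  ext m
  constructor
  · rintro ⟨hm, rfl⟩
    refine ⟨Finsupp.equivFunOnFinite.symm fun j => m (Fin.natAdd a j), ?_, ?_⟩
    · simpa [Finsupp.degree_eq_sum, Fin.sum_univ_add] using hm
    · ext i
      refine Fin.addCases (fun i => ?_) (fun j => ?_) i <;> simp [append]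
  · rintro ⟨v, hv, rfl⟩
    exact ⟨by simpa [append, Finsupp.degree_eq_sum, Fin.sum_univ_add] using hv,
      funext fun i => by simp [append]⟩

lemma ncard_setOf_mem_eq_sum {α β : Type*} {s : Set α} (hs : s.Finite) (f : α → β) (U : Finset β) :
    {x | x ∈ s ∧ f x ∈ U}.ncard = ∑ u ∈ U, {x | x ∈ s ∧ f x = u}.ncard := by
  classical
  lift s to Finset α using hs
  have hcoe (p : α → Prop) [DecidablePred p] :
      {x | x ∈ (s : Set α) ∧ p x}.ncard = (s.filter p).card := by
    rw [← Set.ncard_coe_finset, Finset.coe_filter]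
    rfl
  have hmaps : Set.MapsTo f (s.filter (f · ∈ U)) U := fun x hx => (Finset.mem_filter.1 hx).2
  rw [hcoe, Finset.card_eq_sum_card_fiberwise hmaps]
  refine Finset.sum_congr rfl fun u hu => ?_
  rw [hcoe, Finset.filter_filter]
  congr 1
  exact Finset.filter_congr fun x _ => ⟨And.right, fun h => ⟨h ▸ hu, h⟩⟩

end MonomialCounting

namespace KMAlgebra

/-- `Nonstandard u` says that `x₁^{u₀} ⋯ x₅^{u₄}` lies in `KMIdeal K`: the first alternative is
divisibility by some `x₁xᵢ`, the second is membership in `(x₂, x₃, x₄, x₅)³`. -/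
def Nonstandard (u : Fin 5 → ℕ) : Prop :=
  (1 ≤ u 0 ∧ 2 ≤ ∑ i, u i) ∨ 3 ≤ ∑ i : Fin 4, u i.succ

instance : DecidablePred Nonstandard := fun u => by
  unfold Nonstandard
  infer_instance

/-- The exponents of the monomials in `KMIdeal K`; the last three exponents are free. -/
def nonstandardExponents : Set (Fin 8 →₀ ℕ) :=
  {m | Nonstandard fun i => m (Fin.castAdd 3 i)}

lemma isUpperSet_nonstandardExponents : IsUpperSet nonstandardExponents := fun _ _ hle hm =>
  hm.imp
    (fun h => ⟨h.1.trans (hle _), h.2.trans (Finset.sum_le_sum fun _ _ => hle _)⟩)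
    (fun h => h.trans (Finset.sum_le_sum fun _ _ => hle _))

lemma X_zero_mul_X_mem_KMIdeal (K : Type*) [Field K] (i : Fin 5) :
    (X 0 * X (Fin.castAdd 3 i) : MvPolynomial (Fin 8) K) ∈ KMIdeal K := by
  refine Ideal.mem_sup_left (Ideal.subset_span ?_)
  fin_cases i <;> simp

lemma monomial_mem_KMIdeal_of_le_sum (K : Type*) [Field K] {m : Fin 8 →₀ ℕ}
    (h0 : 1 ≤ m 0) (hsum : 2 ≤ ∑ i : Fin 5, m (Fin.castAdd 3 i)) :
    monomial m (1 : K) ∈ KMIdeal K := by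
  obtain ⟨m, rfl⟩ := exists_add_of_le (Finsupp.single_le_iff.2 h0)
  have hsum' : ∑ i : Fin 5, m (Fin.castAdd 3 i) ≠ 0 := by
    simp only [Finsupp.add_apply, Finset.sum_add_distrib] at hsum
    have h1 : ∑ i : Fin 5, Finsupp.single (0 : Fin 8) 1 (Fin.castAdd 3 i) = 1 := by
      simp only [Finsupp.single_apply]
      decide
    omega
  obtain ⟨i, -, hi⟩ := Finset.exists_ne_zero_of_sum_ne_zero hsum'
  obtain ⟨m, rfl⟩ := exists_add_of_le (Finsupp.single_le_iff.2 (Nat.one_le_iff_ne_zero.2 hi))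
  refine Ideal.mem_of_dvd _ ⟨monomial m 1, ?_⟩ (X_zero_mul_X_mem_KMIdeal K i)
  simp only [X, monomial_mul, mul_one, add_assoc]

lemma span_X_pow_three (K : Type*) [Field K] :
    Ideal.span {(X 1 : MvPolynomial (Fin 8) K), X 2, X 3, X 4} ^ 3 =
      restrictSupportIdeal K {m | 3 ≤ ∑ i ∈ {1, 2, 3, 4}, m i} (isUpperSet_le_sum _ 3) := by
  rw [← span_X_image_pow_eq_restrictSupportIdeal]
  simp [Set.image_insert_eq]

lemma KMIdeal_eq_restrictSupportIdeal (K : Type*) [Field K] :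
    KMIdeal K = restrictSupportIdeal K nonstandardExponents isUpperSet_nonstandardExponents := by
  have hsum (m : Fin 8 →₀ ℕ) :
      ∑ i ∈ {1, 2, 3, 4}, m i = ∑ i : Fin 4, m (Fin.castAdd 3 i.succ) := by
    simp [Fin.sum_univ_four, add_assoc]
  refine le_antisymm ?_ (restrictSupportIdeal_le_iff.2 ?_)
  · rw [KMIdeal, span_X_pow_three, Submodule.add_eq_sup]
    refine sup_le (Ideal.span_le.2 ?_) (restrictSupport_mono K fun m hm => Or.inr (hsum m ▸ hm))
    rintro _ (rfl | rfl | rfl | rfl | rfl) <;> simp only [X, monomial_mul] <;>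
      refine monomial_mem_restrictSupportIdeal (Or.inl ?_) _ <;>
      simp [Fin.sum_univ_five, Finsupp.single_apply]
  · rintro m (⟨h0, h⟩ | h)
    · exact monomial_mem_KMIdeal_of_le_sum K h0 h
    · refine Ideal.mem_sup_right ?_
      rw [span_X_pow_three]
      exact monomial_mem_restrictSupportIdeal (h.trans_eq (hsum m).symm) 1

lemma X_pow_three_mem_KMIdeal (K : Type*) [Field K] (i : Fin 5) :
    (X (Fin.castAdd 3 i) ^ 3 : MvPolynomial (Fin 8) K) ∈ KMIdeal K := by
  rw [KMIdeal_eq_restrictSupportIdeal, X_pow_eq_monomial]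
  refine monomial_mem_restrictSupportIdeal ?_ 1
  fin_cases i <;>
    simp [nonstandardExponents, Nonstandard, Fin.sum_univ_succ]

/-- The exponent tuples of `x₁, …, x₅` in monomials outside `KMIdeal K`. -/
def standardExponents : Finset (Fin 5 → ℕ) :=
  {u ∈ Fintype.piFinset fun _ => Finset.range 3 | ¬ Nonstandard u}

lemma mem_standardExponents {u : Fin 5 → ℕ} : u ∈ standardExponents ↔ ¬ Nonstandard u := by
  simp only [standardExponents, Finset.mem_filter, Fintype.mem_piFinset, Finset.mem_range,
    and_iff_right_iff_imp, Nonstandard, Fin.sum_univ_five, Fin.sum_univ_four, Fin.reduceSucc]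
  intro h i
  fin_cases i <;> grind

lemma sum_standardExponents {M : Type*} [AddCommMonoid M] (g : ℕ → M) :
    ∑ u ∈ standardExponents, g (∑ i, u i) = g 0 + 5 • g 1 + 10 • g 2 := by
  have himage : standardExponents.image (fun u => ∑ i, u i) = Finset.range 3 := by decide +kernel
  have hcard : ∀ d : Fin 3, (standardExponents.filter fun u => ∑ i, u i = (d : ℕ)).card =
      ![1, 5, 10] d := by decide +kernel
  rw [Finset.sum_comp g fun u : Fin 5 → ℕ => ∑ i, u i, himage, Finset.sum_range (n := 3),
    Fin.sum_univ_three, hcard, hcard, hcard]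
  simp

instance finite_KMGrading (K : Type*) [Field K] (n : ℕ) : Module.Finite K (KMGrading K n) :=
  Module.Finite.iff_fg.2 ((homogeneousSubmodule_fg (Fin 8) K n).map _)

lemma finrank_KMGrading (K : Type*) [Field K] (n : ℕ) :
    Module.finrank K (KMGrading K n) =
      (n + 2).choose 2 + 5 * (n + 1).choose 2 + 10 * n.choose 2 := by
  have hdiff : {m : Fin 8 →₀ ℕ | m.degree = n} \ nonstandardExponents =
      {m | m ∈ {m : Fin 8 →₀ ℕ | m.degree = n} ∧
        (fun i => m (Fin.castAdd 3 i)) ∈ standardExponents} :=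
    Set.ext fun m => and_congr_right fun _ =>
      (mem_standardExponents (u := fun i => m (Fin.castAdd 3 i))).symm
  rw [KMGrading, homogeneousSubmodule_eq_finsupp_supported]
  refine (finrank_map_mkₐ_restrictSupport (KMIdeal_eq_restrictSupportIdeal K) _).trans ?_
  rw [hdiff, ncard_setOf_mem_eq_sum (Finsupp.finite_of_degree_eq n)]
  calc _ = ∑ u ∈ standardExponents, (n + 2 - ∑ i, u i).choose 2 :=
        Finset.sum_congr rfl fun u _ =>
          (ncard_degree_eq_and_castAdd_eq u n).trans (ncard_add_degree_eq _ n)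
    _ = _ := sum_standardExponents fun d => (n + 2 - d).choose 2

lemma hilbertSeries_eq (K : Type*) [Field K] :
    (PowerSeries.mk fun i => (Module.finrank K (KMGrading K i) : ℤ)) =
      (1 + 5 * PowerSeries.X + 10 * PowerSeries.X ^ 2) *
        PowerSeries.mk fun n => ((2 + n).choose 2 : ℤ) := by
  ext n
  have hshift (d : ℕ) : PowerSeries.coeff n
      (PowerSeries.X ^ d * PowerSeries.mk fun n => ((2 + n).choose 2 : ℤ) : PowerSeries ℤ) =
      ((n + 2 - d).choose 2 : ℕ) := by
    rw [PowerSeries.coeff_X_pow_mul', PowerSeries.coeff_mk]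
    split_ifs with h
    · congr 2
      omega
    · rw [Nat.choose_eq_zero_of_lt (by omega), Nat.cast_zero]
  have h0 := hshift 0
  have h1 := hshift 1
  have h2 := hshift 2
  rw [pow_zero, one_mul] at h0
  rw [pow_one] at h1
  rw [← map_ofNat PowerSeries.C 5, ← map_ofNat PowerSeries.C 10, add_mul, add_mul, one_mul,
    map_add, map_add, mul_assoc, mul_assoc, PowerSeries.coeff_C_mul, PowerSeries.coeff_C_mul,
    PowerSeries.coeff_mk, h0, h1, h2, finrank_KMGrading]
  push_cast
  rfl

lemma coe_hPolynomial_eq (K : Type*) [Field K] :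
    ((1 + 5 * Polynomial.X + 10 * Polynomial.X ^ 2 : Polynomial ℤ) : PowerSeries ℤ) =
      (PowerSeries.mk fun i => (Module.finrank K (KMGrading K i) : ℤ)) *
        (1 - PowerSeries.X) ^ 3 := by
  have hinv : PowerSeries.mk (fun n => ((2 + n).choose 2 : ℤ)) * (1 - PowerSeries.X) ^ 3 = 1 := by
    rw [← PowerSeries.invOneSubPow_val_succ_eq_mk_add_choose ℤ 2,
      ← PowerSeries.invOneSubPow_inv_eq_one_sub_pow]
    exact (PowerSeries.invOneSubPow ℤ 3).val_inv
  have hcoe (m : ℕ) [m.AtLeastTwo] :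
      ((OfNat.ofNat m : Polynomial ℤ) : PowerSeries ℤ) = OfNat.ofNat m :=
    map_ofNat (Polynomial.coeToPowerSeries.ringHom (R := ℤ)) m
  rw [hilbertSeries_eq, mul_assoc, hinv, mul_one]
  simp only [Polynomial.coe_add, Polynomial.coe_one, Polynomial.coe_mul, Polynomial.coe_pow,
    Polynomial.coe_X, hcoe]

end KMAlgebra

section KrullDimension

lemma ringKrullDim_eq_of_surjective_of_ker_le_nilradical {R S : Type*} [CommRing R] [CommRing S]
    {f : R →+* S} (hf : Function.Surjective f) (hker : RingHom.ker f ≤ nilradical R) :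
    ringKrullDim R = ringKrullDim S := by
  refine le_antisymm ?_ (ringKrullDim_le_of_surjective f hf)
  rw [← ringKrullDim_eq_of_ringEquiv (RingHom.quotientKerEquivOfSurjective hf),
    ringKrullDim_quotient, (PrimeSpectrum.zeroLocus_eq_univ_iff _).2 hker]
  exact (Order.krullDim_eq_of_orderIso OrderIso.Set.univ).ge

end KrullDimension

namespace KMAlgebra

variable (K : Type*) [Field K]

/-- The generator `x_{i+1}` of the algebra `A = KMAlgebra K`. -/
noncomputable def gen (i : Fin 8) : KMAlgebra K :=
  Ideal.Quotient.mk (KMIdeal K) (X i)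

lemma KMTheta_eq_gen (j : Fin 3) : KMTheta K j = gen K (Fin.natAdd 5 j) := by
  fin_cases j <;> rfl

lemma gen_zero_mul_gen (i : Fin 5) : gen K 0 * gen K (Fin.castAdd 3 i) = 0 :=
  Ideal.Quotient.eq_zero_iff_mem.2 (X_zero_mul_X_mem_KMIdeal K i)

lemma gen_pow_three (i : Fin 5) : gen K (Fin.castAdd 3 i) ^ 3 = 0 :=
  Ideal.Quotient.eq_zero_iff_mem.2 (X_pow_three_mem_KMIdeal K i)

lemma gen_mem_KMGrading (i : Fin 8) : gen K i ∈ KMGrading K 1 :=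
  ⟨X i, isHomogeneous_X K i, rfl⟩

lemma KMTheta_mem_KMGrading (j : Fin 3) : KMTheta K j ∈ KMGrading K 1 :=
  KMTheta_eq_gen K j ▸ gen_mem_KMGrading K _

lemma mul_mem_KMGrading {m n : ℕ} {a b : KMAlgebra K} (ha : a ∈ KMGrading K m)
    (hb : b ∈ KMGrading K n) : a * b ∈ KMGrading K (m + n) := by
  obtain ⟨f, hf, rfl⟩ := ha
  obtain ⟨g, hg, rfl⟩ := hb
  exact ⟨f * g, IsHomogeneous.mul hf hg, map_mul (Ideal.Quotient.mkₐ K (KMIdeal K)) f g⟩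

/-- The inclusion `K[x₆, x₇, x₈] → A`. -/
noncomputable def ofPoly : MvPolynomial (Fin 3) K →ₐ[K] KMAlgebra K :=
  (Ideal.Quotient.mkₐ K (KMIdeal K)).comp (rename (Fin.natAdd 5))

lemma ofPoly_X (j : Fin 3) : ofPoly K (X j) = KMTheta K j := by
  rw [KMTheta_eq_gen, ofPoly, AlgHom.comp_apply, rename_X]
  rfl

lemma ofPoly_mem_KMGrading {n : ℕ} {f : MvPolynomial (Fin 3) K} (hf : f.IsHomogeneous n) :
    ofPoly K f ∈ KMGrading K n :=
  ⟨_, hf.rename_isHomogeneous, rfl⟩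

lemma KMIdeal_le_ker {S : Type*} [CommRing S] [Algebra K S] {g : MvPolynomial (Fin 8) K →ₐ[K] S}
    (h0 : g (X 0) * g (X 0) = 0) (h : ∀ i : Fin 4, g (X (Fin.castAdd 3 i.succ)) = 0) :
    KMIdeal K ≤ RingHom.ker g := by
  have h1 : g (X 1) = 0 := h 0
  have h2 : g (X 2) = 0 := h 1
  have h3 : g (X 3) = 0 := h 2
  have h4 : g (X 4) = 0 := h 3
  refine sup_le (Ideal.span_le.2 ?_)
    ((Ideal.pow_le_self three_ne_zero).trans (Ideal.span_le.2 ?_))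
  · rintro _ (rfl | rfl | rfl | rfl | rfl) <;> simp [h0, h1, h2, h3, h4]
  · rintro _ (rfl | rfl | rfl | rfl) <;> assumption

/-- The map `A → K[x₆, x₇, x₈][ε]` with `x₁ ↦ ε` that kills `x₂, …, x₅`. Its `ε`-part recovers
`f` from `x₁ f`, for `f` in `K[x₆, x₇, x₈]`. -/
noncomputable def toDualNumber : KMAlgebra K →ₐ[K] DualNumber (MvPolynomial (Fin 3) K) :=
  Ideal.Quotient.liftₐ (KMIdeal K)
    (aeval ![DualNumber.eps, 0, 0, 0, 0, TrivSqZeroExt.inl (X 0), TrivSqZeroExt.inl (X 1),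
      TrivSqZeroExt.inl (X 2)]) <|
    KMIdeal_le_ker K (by simp) fun i => by fin_cases i <;> simp

lemma toDualNumber_gen_zero : toDualNumber K (gen K 0) = DualNumber.eps :=
  (aeval_X _ 0).trans rfl

lemma toDualNumber_ofPoly (f : MvPolynomial (Fin 3) K) :
    toDualNumber K (ofPoly K f) = TrivSqZeroExt.inl f := by
  suffices (toDualNumber K).comp (ofPoly K) = TrivSqZeroExt.inlAlgHom K _ _ from
    DFunLike.congr_fun this f
  refine algHom_ext fun j => ?_
  rw [AlgHom.comp_apply, ofPoly_X, KMTheta_eq_gen]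
  exact (aeval_X _ _).trans (by fin_cases j <;> rfl)

lemma snd_toDualNumber_gen_zero_mul (f : MvPolynomial (Fin 3) K) :
    (toDualNumber K (gen K 0 * ofPoly K f)).snd = f := by
  simp [toDualNumber_gen_zero, toDualNumber_ofPoly]

/-- The retraction `A → K[x₆, x₇, x₈]` of `ofPoly` that kills `x₁, …, x₅`. -/
noncomputable def toPoly : KMAlgebra K →ₐ[K] MvPolynomial (Fin 3) K :=
  (TrivSqZeroExt.fstHom K _ _).comp (toDualNumber K)

lemma toPoly_ofPoly (f : MvPolynomial (Fin 3) K) : toPoly K (ofPoly K f) = f :=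
  congrArg TrivSqZeroExt.fst (toDualNumber_ofPoly K f)

lemma toPoly_surjective : Function.Surjective (toPoly K) :=
  fun f => ⟨_, toPoly_ofPoly K f⟩

lemma toPoly_KMTheta (j : Fin 3) : toPoly K (KMTheta K j) = X j := by
  rw [← ofPoly_X, toPoly_ofPoly]

lemma toPoly_gen_castAdd (i : Fin 5) : toPoly K (gen K (Fin.castAdd 3 i)) = 0 :=
  (congrArg TrivSqZeroExt.fst (aeval_X _ _)).trans (by fin_cases i <;> rfl)

lemma isHomogeneous_toPoly {n : ℕ} {a : KMAlgebra K} (ha : a ∈ KMGrading K n) :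
    (toPoly K a).IsHomogeneous n := by
  obtain ⟨f, hf, rfl⟩ := ha
  have hgen (i : Fin 8) : (toPoly K (gen K i)).IsHomogeneous 1 := by
    induction i using Fin.addCases (m := 5) (n := 3) with
    | left i => exact (toPoly_gen_castAdd K i).symm ▸ isHomogeneous_zero _ _ _
    | right j => exact KMTheta_eq_gen K j ▸ (toPoly_KMTheta K j).symm ▸ isHomogeneous_X _ _
  have haeval : (toPoly K).comp (Ideal.Quotient.mkₐ K (KMIdeal K)) =
      aeval fun i => toPoly K (gen K i) := aeval_unique _
  change (((toPoly K).comp (Ideal.Quotient.mkₐ K (KMIdeal K))) f).IsHomogeneous n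
  rw [haeval, ← one_mul n]
  exact IsHomogeneous.aeval hf _ hgen

lemma sub_ofPoly_toPoly_mem {J : Ideal (KMAlgebra K)}
    (hJ : ∀ i : Fin 5, gen K (Fin.castAdd 3 i) ∈ J) (a : KMAlgebra K) :
    a - ofPoly K (toPoly K a) ∈ J := by
  rw [← Ideal.Quotient.mk_eq_mk_iff_sub_mem]
  suffices Ideal.Quotient.mkₐ K J =
      (Ideal.Quotient.mkₐ K J).comp ((ofPoly K).comp (toPoly K)) from DFunLike.congr_fun this a
  refine Ideal.Quotient.algHom_ext _ (algHom_ext fun i => ?_)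
  change Ideal.Quotient.mk J (gen K i) = Ideal.Quotient.mk J (ofPoly K (toPoly K (gen K i)))
  induction i using Fin.addCases (m := 5) (n := 3) with
  | left i =>
    rw [toPoly_gen_castAdd, map_zero, map_zero, Ideal.Quotient.eq_zero_iff_mem]
    exact hJ i
  | right j => rw [← KMTheta_eq_gen, toPoly_KMTheta, ofPoly_X]

lemma gen_zero_mul_ofPoly_toPoly (a : KMAlgebra K) :
    gen K 0 * ofPoly K (toPoly K a) = gen K 0 * a := by
  have hann : a - ofPoly K (toPoly K a) ∈ (Ideal.span {gen K 0}).annihilator :=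
    sub_ofPoly_toPoly_mem K (fun i => (Submodule.mem_annihilator_span_singleton _ _).2
      ((mul_comm _ _).trans (gen_zero_mul_gen K i))) a
  have hzero := (Submodule.mem_annihilator_span_singleton _ _).1 hann
  rw [smul_eq_mul, mul_comm, mul_sub, sub_eq_zero] at hzero
  exact hzero.symm

lemma ringKrullDim_eq_three : ringKrullDim (KMAlgebra K) = 3 := by
  have hker : RingHom.ker (toPoly K) ≤ nilradical (KMAlgebra K) := fun a ha => by
    have hnil := sub_ofPoly_toPoly_mem K (J := nilradical (KMAlgebra K))
      (fun i => ⟨3, gen_pow_three K i⟩) a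
    rwa [(RingHom.mem_ker ..).1 ha, map_zero, sub_zero] at hnil
  rw [ringKrullDim_eq_of_surjective_of_ker_le_nilradical (toPoly_surjective K) hker,
    MvPolynomial.ringKrullDim_of_isNoetherianRing, ringKrullDim_eq_zero_of_field]
  simp

end KMAlgebra

section Finiteness

lemma finite_of_surjective_of_isIntegral_X {σ R S : Type*} [Finite σ] [CommRing R] [CommRing S]
    [Algebra R S] {q : MvPolynomial σ R →ₐ[R] S} (hq : Function.Surjective q)
    (hX : ∀ i, IsIntegral R (q (X i))) : Module.Finite R S := by
  have hfg := fg_adjoin_of_finite (Set.finite_range fun i => q (X i)) (Set.forall_mem_range.2 hX)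
  rw [Set.range_comp' q X, ← AlgHom.map_adjoin, adjoin_range_X, Algebra.map_top,
    (AlgHom.range_eq_top q).2 hq, Algebra.top_toSubmodule] at hfg
  exact ⟨hfg⟩

lemma not_finite_quotient_of_surjective_polynomial {R A : Type*} [CommRing R] [Nontrivial R]
    [CommRing A] [Algebra R A] {p : A →ₐ[R] Polynomial R} (hp : Function.Surjective p)
    {J : Ideal A} (hJ : J ≤ RingHom.ker p) : ¬ Module.Finite R (A ⧸ J) := fun _ =>
  Polynomial.not_finite (R := R) <|
    Module.Finite.of_surjective (Ideal.Quotient.liftₐ J p hJ).toLinearMap fun y =>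
      (hp y).imp' (Ideal.Quotient.mk J) fun _ hx => hx

lemma injective_of_surjective_of_isNoetherianRing {R : Type*} [CommRing R] [IsNoetherianRing R]
    {φ : R →+* R} (hφ : Function.Surjective φ) : Function.Injective φ := by
  have hmono : Monotone fun n => RingHom.ker (φ ^ n) := monotone_nat_of_le_succ fun n x hx => by
    rw [RingHom.mem_ker, pow_succ', RingHom.mul_def, RingHom.comp_apply,
      (RingHom.mem_ker ..).1 hx, map_zero]
  obtain ⟨n, hn⟩ := monotone_stabilizes_iff_noetherian.2 ‹IsNoetherianRing R› ⟨_, hmono⟩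
  have hstable : RingHom.ker (φ ^ n) = RingHom.ker (φ ^ (n + 1)) := hn (n + 1) n.le_succ
  have hsurj : Function.Surjective (φ ^ n) := by
    rw [RingHom.coe_pow]
    exact hφ.iterate n
  refine (injective_iff_map_eq_zero φ).2 fun a ha => ?_
  obtain ⟨b, rfl⟩ := hsurj a
  have hb : b ∈ RingHom.ker (φ ^ (n + 1)) := by
    rwa [RingHom.mem_ker, pow_succ', RingHom.mul_def, RingHom.comp_apply]
  rwa [← hstable] at hb

end Finiteness

section RegularSequences

lemma isWeaklyRegular_ofFn {R : Type*} [CommRing R] {n : ℕ} {θ : Fin n → R}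
    (h : ∀ k a, θ k * a ∈ Ideal.span (θ '' Set.Iio k) → a ∈ Ideal.span (θ '' Set.Iio k)) :
    RingTheory.Sequence.IsWeaklyRegular R (List.ofFn θ) := by
  refine (RingTheory.Sequence.isWeaklyRegular_iff_Fin _ _).2 fun k => ?_
  obtain ⟨k, rfl⟩ := (finCongr (List.length_ofFn (f := θ)).symm).surjective k
  have hideal : Ideal.ofList ((List.ofFn θ).take k) = Ideal.span (θ '' Set.Iio k) := by
    refine congrArg Ideal.span (Set.ext fun a => List.mem_take_iff_getElem.trans ?_)
    simp only [List.getElem_ofFn, List.length_ofFn, Set.mem_image, Fin.exists_iff, Set.mem_Iio,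
      Fin.lt_def]
    exact exists_congr fun i => ⟨fun ⟨hi, ha⟩ => ⟨hi.trans_le (min_le_right _ _),
      hi.trans_le (min_le_left _ _), ha⟩, fun ⟨hn, hi, ha⟩ => ⟨lt_min hi hn, ha⟩⟩
  rw [isSMulRegular_iff_right_eq_zero_of_smul]
  intro x hx
  obtain ⟨a, rfl⟩ := Submodule.mkQ_surjective _ x
  rw [← map_smul, Submodule.mkQ_apply, Submodule.Quotient.mk_eq_zero] at hx
  rw [Submodule.mkQ_apply, Submodule.Quotient.mk_eq_zero]
  simp only [finCongr_apply, Fin.val_cast, Fin.getElem_fin, List.getElem_ofFn, smul_eq_mul,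
    Ideal.mul_top, hideal] at hx ⊢
  exact h k a hx

lemma mem_of_forall_sum_smul_mem {ι R V : Type*} [Fintype ι] [DecidableEq ι] [CommRing R]
    [AddCommGroup V] [Module R V] {N : Submodule R V} {M : Matrix ι ι R} (hM : IsUnit M.det)
    {v : ι → V} (h : ∀ i, ∑ j, M i j • v j ∈ N) (k : ι) : v k ∈ N := by
  have hv : v k = ∑ i, M⁻¹ k i • ∑ j, M i j • v j := by
    simp only [Finset.smul_sum, smul_smul]
    rw [Finset.sum_comm]
    simp only [← Finset.sum_smul, ← Matrix.mul_apply, Matrix.nonsing_inv_mul M hM,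
      Matrix.one_apply, ite_smul, one_smul, zero_smul, Finset.sum_ite_eq, Finset.mem_univ, if_true]
  rw [hv]
  exact N.sum_mem fun i _ => N.smul_mem _ (h i)

end RegularSequences

namespace KMAlgebra

variable (K : Type*) [Field K]

lemma finite_quotient_span_range_KMTheta :
    Module.Finite K (KMAlgebra K ⧸ Ideal.span (Set.range (KMTheta K))) := by
  set J := Ideal.span (Set.range (KMTheta K))
  have hsurj : Function.Surjective
      ((Ideal.Quotient.mkₐ K J).comp (Ideal.Quotient.mkₐ K (KMIdeal K))) :=
    (Ideal.Quotient.mkₐ_surjective K J).comp (Ideal.Quotient.mkₐ_surjective K _)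
  refine finite_of_surjective_of_isIntegral_X (S := KMAlgebra K ⧸ J) hsurj fun i => ?_
  change IsIntegral K (Ideal.Quotient.mk J (gen K i))
  induction i using Fin.addCases (m := 5) (n := 3) with
  | left i =>
    refine IsIntegral.of_pow three_pos ?_
    rw [← map_pow, gen_pow_three, map_zero]
    exact isIntegral_zero
  | right j =>
    rw [← KMTheta_eq_gen, Ideal.Quotient.eq_zero_iff_mem.2
      (Ideal.subset_span (Set.mem_range_self j))]
    exact isIntegral_zero

lemma mk_mem_span_gen_image_iff {T : Set (Fin 8)} {f : MvPolynomial (Fin 8) K} :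
    Ideal.Quotient.mk (KMIdeal K) f ∈ Ideal.span (gen K '' T) ↔
      f ∈ restrictSupportIdeal K ({m | ∃ i ∈ T, m i ≠ 0} ∪ nonstandardExponents)
        ((isUpperSet_exists_ne_zero T).union isUpperSet_nonstandardExponents) := by
  have himage : gen K '' T = Ideal.Quotient.mk (KMIdeal K) '' (X '' T) := by
    rw [Set.image_image]
    rfl
  rw [himage, ← Ideal.map_span, Ideal.mem_quotient_iff_mem_sup,
    span_X_image_eq_restrictSupportIdeal,
    ← restrictSupportIdeal_sup _ isUpperSet_nonstandardExponents, ← KMIdeal_eq_restrictSupportIdeal]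

lemma mem_span_gen_image_of_gen_mul_mem {T : Set (Fin 8)} {j : Fin 3} (hj : Fin.natAdd 5 j ∉ T)
    {a : KMAlgebra K} (ha : gen K (Fin.natAdd 5 j) * a ∈ Ideal.span (gen K '' T)) :
    a ∈ Ideal.span (gen K '' T) := by
  obtain ⟨f, rfl⟩ := Ideal.Quotient.mk_surjective a
  rw [gen, ← map_mul, mk_mem_span_gen_image_iff, X_mul_mem_restrictSupportIdeal_iff] at ha
  · exact (mk_mem_span_gen_image_iff K).2 ha
  have hne {m : Fin 8 →₀ ℕ} {i : Fin 8} (hi : i ≠ Fin.natAdd 5 j) :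
      (Finsupp.single (Fin.natAdd 5 j) 1 + m : Fin 8 →₀ ℕ) i = m i := by
    rw [Finsupp.add_apply, Finsupp.single_eq_of_ne hi, zero_add]
  rintro m (⟨i, hi, hmi⟩ | hm)
  · refine Or.inl ⟨i, hi, ?_⟩
    rwa [hne (ne_of_mem_of_not_mem hi hj)] at hmi
  · refine Or.inr ?_
    have hlow (i : Fin 5) : Fin.castAdd 3 i ≠ Fin.natAdd 5 j :=
      Fin.ne_of_lt (i.isLt.trans_le (Nat.le_add_right 5 j))
    simpa only [nonstandardExponents, Set.mem_ofPred_eq, hne (hlow _)] using hm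

lemma span_gen_image_ne_top (T : Set (Fin 8)) : Ideal.span (gen K '' T) ≠ ⊤ := by
  rw [Ne, Ideal.eq_top_iff_one, ← map_one (Ideal.Quotient.mk (KMIdeal K)),
    mk_mem_span_gen_image_iff, mem_restrictSupportIdeal]
  intro h
  simpa [nonstandardExponents, Nonstandard] using h 0 (by simp)

lemma isRegular_KMTheta : RingTheory.Sequence.IsRegular (KMAlgebra K) (List.ofFn (KMTheta K)) := by
  have himage (T : Set (Fin 3)) :
      KMTheta K '' T = gen K '' ((Fin.natAdd 5 : Fin 3 → Fin 8) '' T) := by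
    rw [Set.image_image]
    exact Set.image_congr fun j _ => KMTheta_eq_gen K j
  refine (RingTheory.Sequence.isRegular_iff _ _).2 ⟨isWeaklyRegular_ofFn fun j a ha => ?_, ?_⟩
  · rw [himage] at ha ⊢
    refine mem_span_gen_image_of_gen_mul_mem K (j := j) ?_ (KMTheta_eq_gen K j ▸ ha)
    rw [Set.mem_image]
    rintro ⟨i, hi, hij⟩
    exact (Set.mem_Iio.1 hi).ne (Fin.natAdd_injective 3 5 hij)
  · have htop := span_gen_image_ne_top K ((Fin.natAdd 5 : Fin 3 → Fin 8) '' Set.univ)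
    have hspan : Ideal.ofList (List.ofFn (KMTheta K)) = Ideal.span (Set.range (KMTheta K)) :=
      congrArg Ideal.span (Set.ext fun _ => List.mem_ofFn)
    rwa [← himage, Set.image_univ, ← hspan, ← Ideal.mul_top (Ideal.ofList _), ne_comm] at htop

lemma exists_eq_sum_smul_of_mem_KMGrading_one {a : KMAlgebra K} (ha : a ∈ KMGrading K 1) :
    ∃ (b : Fin 5 → K) (c : Fin 3 → K),
      a = ∑ i, b i • gen K (Fin.castAdd 3 i) + ∑ j, c j • KMTheta K j := by
  obtain ⟨f, hf, rfl⟩ := ha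
  rw [homogeneousSubmodule_one_eq_span_X] at hf
  obtain ⟨b, rfl⟩ := (Submodule.mem_span_range_iff_exists_fun K).1 hf
  refine ⟨fun i => b (Fin.castAdd 3 i), fun j => b (Fin.natAdd 5 j), ?_⟩
  rw [map_sum, Fin.sum_univ_add (a := 5) (b := 3)]
  simp only [map_smul, KMTheta_eq_gen]
  rfl

end KMAlgebra

namespace KMAlgebra

variable (K : Type*) [Field K]

lemma map_KMIdeal_congr {S : Type*} [CommRing S] [Algebra K S]
    {g g' : MvPolynomial (Fin 8) K →ₐ[K] S}
    (h : ∀ i : Fin 5, g (X (Fin.castAdd 3 i)) = g' (X (Fin.castAdd 3 i))) :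
    (KMIdeal K).map g = (KMIdeal K).map g' := by
  have h0 : g (X 0) = g' (X 0) := h 0
  have h1 : g (X 1) = g' (X 1) := h 1
  have h2 : g (X 2) = g' (X 2) := h 2
  have h3 : g (X 3) = g' (X 3) := h 3
  have h4 : g (X 4) = g' (X 4) := h 4
  simp only [KMIdeal, Submodule.add_eq_sup, Ideal.map_sup, Ideal.map_pow, Ideal.map_span,
    Set.image_insert_eq, Set.image_singleton, map_mul, h0, h1, h2, h3, h4]

lemma KMIdeal_le_ker_of_eq_gen {g : MvPolynomial (Fin 8) K →ₐ[K] KMAlgebra K}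
    (hg : ∀ i : Fin 5, g (X (Fin.castAdd 3 i)) = gen K (Fin.castAdd 3 i)) :
    KMIdeal K ≤ RingHom.ker g := by
  rw [← Ideal.map_eq_bot_iff_le_ker,
    map_KMIdeal_congr K (g' := Ideal.Quotient.mkₐ K (KMIdeal K)) hg, Ideal.map_eq_bot_iff_le_ker]
  exact (Ideal.Quotient.mkₐ_ker K (KMIdeal K)).ge

variable {K}

/-- The endomorphism of `A` fixing `x₁, …, x₅` and sending `x₆, x₇, x₈` to `y`. -/
noncomputable def substTheta (y : Fin 3 → KMAlgebra K) : KMAlgebra K →ₐ[K] KMAlgebra K :=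
  Ideal.Quotient.liftₐ (KMIdeal K)
    (aeval (Fin.append (fun i : Fin 5 => gen K (Fin.castAdd 3 i)) y)) <|
    KMIdeal_le_ker_of_eq_gen K fun i => (aeval_X _ _).trans (Fin.append_left _ _ i)

lemma substTheta_gen (y : Fin 3 → KMAlgebra K) (i : Fin 5) :
    substTheta y (gen K (Fin.castAdd 3 i)) = gen K (Fin.castAdd 3 i) :=
  (aeval_X _ _).trans (Fin.append_left _ _ i)

lemma substTheta_KMTheta (y : Fin 3 → KMAlgebra K) (j : Fin 3) :
    substTheta y (KMTheta K j) = y j := by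
  rw [KMTheta_eq_gen]
  exact (aeval_X _ _).trans (Fin.append_right _ _ j)

lemma eq_top_of_gen_mem {B : Subalgebra K (KMAlgebra K)} (hB : ∀ i, gen K i ∈ B) : B = ⊤ := by
  have hcomap : B.comap (Ideal.Quotient.mkₐ K (KMIdeal K)) = ⊤ := by
    rw [eq_top_iff, ← adjoin_range_X, Algebra.adjoin_le_iff]
    exact Set.range_subset_iff.2 hB
  refine Algebra.eq_top_iff.2 fun a => ?_
  obtain ⟨f, rfl⟩ := Ideal.Quotient.mk_surjective a
  exact (Algebra.eq_top_iff.1 hcomap f :)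

lemma substTheta_surjective {M : Matrix (Fin 3) (Fin 3) K} (hM : IsUnit M.det)
    (b : Fin 3 → Fin 5 → K) {y : Fin 3 → KMAlgebra K}
    (hy : ∀ j, y j = ∑ i, b j i • gen K (Fin.castAdd 3 i) + ∑ k, M j k • KMTheta K k) :
    Function.Surjective (substTheta y) := by
  have hgen (i : Fin 5) : gen K (Fin.castAdd 3 i) ∈ (substTheta y).range :=
    ⟨_, substTheta_gen y i⟩
  have htheta (k : Fin 3) : KMTheta K k ∈ (substTheta y).range := by
    refine mem_of_forall_sum_smul_mem (N := (substTheta y).range.toSubmodule) hM (fun j => ?_) k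
    rw [← add_sub_cancel_left (∑ i, b j i • gen K (Fin.castAdd 3 i)) (∑ k, _), ← hy]
    exact sub_mem ⟨_, substTheta_KMTheta y j⟩
      (sum_mem fun i _ => Subalgebra.smul_mem _ (hgen i) _)
  refine (AlgHom.range_eq_top _).1 (eq_top_of_gen_mem fun i => ?_)
  exact Fin.addCases (m := 5) (n := 3) (motive := fun i => gen K i ∈ (substTheta y).range)
    hgen (fun j => KMTheta_eq_gen K j ▸ htheta j) i

lemma isUnit_det_of_finite {M : Matrix (Fin 3) (Fin 3) K} {y : Fin 3 → KMAlgebra K}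
    (hy : ∀ j, toPoly K (y j) = ∑ k, M j k • X k)
    (hfin : Module.Finite K (KMAlgebra K ⧸ Ideal.span (Set.range y))) : IsUnit M.det := by
  by_contra hdet
  rw [isUnit_iff_ne_zero, not_not] at hdet
  obtain ⟨v, hv, hMv⟩ := Matrix.exists_mulVec_eq_zero_iff.2 hdet
  obtain ⟨k, hk⟩ := Function.ne_iff.1 hv
  let line : MvPolynomial (Fin 3) K →ₐ[K] Polynomial K := aeval fun k => v k • Polynomial.X
  have hline : Function.Surjective line := by
    have hX : line ((v k)⁻¹ • X k) = Polynomial.X := by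
      rw [map_smul, aeval_X, smul_smul, inv_mul_cancel₀ hk, one_smul]
    refine fun p => ⟨Polynomial.aeval ((v k)⁻¹ • X k) p, ?_⟩
    rw [← Polynomial.aeval_algHom_apply, hX, Polynomial.aeval_X_left_apply]
  have hsurj : Function.Surjective (line.comp (toPoly K)) := hline.comp (toPoly_surjective K)
  have hker : Ideal.span (Set.range y) ≤ RingHom.ker (line.comp (toPoly K)) := by
    rw [Ideal.span_le]
    rintro _ ⟨j, rfl⟩
    have hj : ∑ k, M j k * v k = 0 := congrFun hMv j
    change line (toPoly K (y j)) = 0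
    simp only [hy, map_sum, map_smul, line, aeval_X, smul_smul, ← Finset.sum_smul, hj, zero_smul]
  exact not_finite_quotient_of_surjective_polynomial hsurj hker hfin

lemma isRegular_of_finite_quotient {y : Fin 3 → KMAlgebra K} (hy : ∀ j, y j ∈ KMGrading K 1)
    (hfin : Module.Finite K (KMAlgebra K ⧸ Ideal.span (Set.range y))) :
    RingTheory.Sequence.IsRegular (KMAlgebra K) (List.ofFn y) := by
  choose b M hbM using fun j => exists_eq_sum_smul_of_mem_KMGrading_one K (hy j)
  have hdet : IsUnit (Matrix.of M).det := isUnit_det_of_finite (fun j => by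
    rw [hbM]
    simp [toPoly_gen_castAdd, toPoly_KMTheta]) hfin
  have hsurj : Function.Surjective (substTheta y) := substTheta_surjective hdet b hbM
  have hinj : Function.Injective (substTheta y) :=
    injective_of_surjective_of_isNoetherianRing (φ := (substTheta y).toRingHom) hsurj
  let e : KMAlgebra K ≃+* KMAlgebra K := RingEquiv.ofBijective (substTheta y) ⟨hinj, hsurj⟩
  refine (AddEquiv.isRegular_congr (e := e.toAddEquiv) (List.forall₂_iff_get.2 ⟨?_, ?_⟩)).1
    (isRegular_KMTheta K)
  · rw [List.length_ofFn, List.length_ofFn]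
  · intro i h1 h2 a
    rw [List.get_ofFn, List.get_ofFn]
    exact (map_mul (substTheta y) _ a).trans (congrArg (· * _) (substTheta_KMTheta y _))

end KMAlgebra

section Dimensions

lemma finrank_iSup_le_sum {ι K V : Type*} [Fintype ι] [Field K] [AddCommGroup V] [Module K V]
    (p : ι → Submodule K V) [∀ i, Module.Finite K (p i)] :
    Module.finrank K ↥(⨆ i, p i) ≤ ∑ i, Module.finrank K (p i) := by
  classical
  rw [Submodule.iSup_eq_range_dfinsupp_lsum, ← Module.finrank_directSum]
  exact LinearMap.finrank_range_le _

lemma finrank_add_finrank_le_of_le_map_sup {K V W : Type*} [Field K] [AddCommGroup V] [Module K V]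
    [AddCommGroup W] [Module K W] (f : V →ₗ[K] W) {C L : Submodule K V} {M N : Submodule K W}
    [Module.Finite K C] [Module.Finite K N] (hLC : L ≤ C) (hLN : L.map f ≤ N)
    (hM : M ≤ C.map f ⊔ N) :
    Module.finrank K M + Module.finrank K L ≤ Module.finrank K C + Module.finrank K N := by
  obtain ⟨D, hD⟩ := exists_isCompl L
  have hsup : L ⊔ D ⊓ C = C := by
    rw [← sup_inf_assoc_of_le D hLC, hD.sup_eq_top, top_inf_eq]
  have hinf : L ⊓ (D ⊓ C) = ⊥ := by
    rw [← inf_assoc, hD.inf_eq_bot, bot_inf_eq]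
  have : Module.Finite K L := Submodule.finiteDimensional_of_le hLC
  have hC := Submodule.finrank_sup_add_finrank_inf_eq L (D ⊓ C)
  rw [hsup, hinf, finrank_bot, add_zero] at hC
  have hM' : M ≤ (D ⊓ C).map f ⊔ N := hM.trans <| by
    rw [← hsup, Submodule.map_sup, hsup]
    exact sup_le (sup_le (hLN.trans le_sup_right) le_sup_left) le_sup_right
  have hdim := (Submodule.finrank_mono hM').trans
    (Submodule.finrank_add_le_finrank_add_finrank _ _)
  have hmap := Submodule.finrank_map_le f (D ⊓ C)
  omega

lemma finrank_homogeneousSubmodule (σ R : Type*) [Fintype σ] [CommRing R] [Nontrivial R] (n : ℕ) :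
    Module.finrank R (homogeneousSubmodule σ R n) = (Fintype.card σ).multichoose n := by
  rw [homogeneousSubmodule_eq_finsupp_supported, ← ncard_degree_eq, ← Nat.card_coe_set_eq]
  exact Module.finrank_eq_nat_card_basis (basisRestrictSupport R {m : σ →₀ ℕ | m.degree = n})

lemma two_mul_choose_two (n : ℕ) : 2 * (n + 2).choose 2 = (n + 2) * (n + 1) := by
  rw [Nat.choose_two_right, Nat.mul_div_cancel' (Nat.even_mul_pred_self (n + 2)).two_dvd]
  rfl

end Dimensions

section Syzygies

lemma linearIndependent_X_pow (σ R : Type*) [CommSemiring R] {n : ℕ} (hn : n ≠ 0) :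
    LinearIndependent R fun i : σ => (X i : MvPolynomial σ R) ^ n := by
  have hmon := (basisMonomials σ R).linearIndependent.comp _ (Finsupp.single_left_injective hn)
  simpa only [Function.comp_def, coe_basisMonomials, ← X_pow_eq_monomial] using hmon

lemma eq_zero_of_sum_X_pow_mul_eq_zero {σ R : Type*} [Fintype σ] [CommSemiring R] {s : ℕ}
    {g : σ → MvPolynomial σ R} (hg : ∀ j, (g j).IsHomogeneous s)
    (h : ∑ j, X j ^ (s + 1) * g j = 0) (j : σ) : g j = 0 := by
  classical
  ext m
  by_contra hne
  have hdeg : m.degree = s := Finsupp.degree_eq_weight_one (R := ℕ) (σ := σ) ▸ hg j hne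
  have hcoeff : ∀ k ≠ j, coeff (Finsupp.single j (s + 1) + m) (X k ^ (s + 1) * g k) = 0 := by
    intro k hk
    rw [X_pow_eq_monomial, coeff_monomial_mul', if_neg]
    intro hle
    have hmk := Finsupp.single_le_iff.1 hle
    rw [Finsupp.add_apply, Finsupp.single_eq_of_ne hk, zero_add] at hmk
    exact absurd (hmk.trans (Finsupp.le_degree k m)) (by omega)
  have hsum := congrArg (coeff (Finsupp.single j (s + 1) + m)) h
  rw [coeff_sum, Finset.sum_eq_single j (fun k _ => hcoeff k) (by simp), X_pow_eq_monomial,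
    coeff_monomial_mul, one_mul] at hsum
  exact hne hsum

lemma exists_mul_eq_sum_X_pow_mul {K : Type*} [Field K] {s : ℕ} {W : MvPolynomial (Fin 3) K}
    (hW : W.IsHomogeneous (s + 1)) :
    ∃ (f : MvPolynomial (Fin 3) K) (g : Fin 3 → MvPolynomial (Fin 3) K), f ≠ 0 ∧
      f.IsHomogeneous s ∧ (∀ j, (g j).IsHomogeneous s) ∧ W * f = ∑ j, X j ^ (s + 1) * g j := by
  let H := homogeneousSubmodule (Fin 3) K s
  let Φ : H × (Fin 3 → H) →ₗ[K] MvPolynomial (Fin 3) K :=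
    (LinearMap.mulLeft K W ∘ₗ H.subtype).coprod
      (-LinearMap.lsum K (fun _ => H) ℕ fun j => LinearMap.mulLeft K (X j ^ (s + 1)) ∘ₗ H.subtype)
  have hΦ (p) : Φ p = W * p.1 - ∑ j, X j ^ (s + 1) * (p.2 j : MvPolynomial (Fin 3) K) := by
    simp [Φ, sub_eq_add_neg]
  have hdeg (p) : Φ p ∈ homogeneousSubmodule (Fin 3) K (s + 1 + s) := by
    rw [hΦ]
    refine Submodule.sub_mem _ (hW.mul p.1.2) (Submodule.sum_mem _ fun j _ => ?_)
    exact IsHomogeneous.mul (isHomogeneous_X_pow j (s + 1)) (p.2 j).2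
  have : Module.Finite K H := Module.Finite.iff_fg.2 (homogeneousSubmodule_fg _ _ _)
  have : Module.Finite K (homogeneousSubmodule (Fin 3) K (s + 1 + s)) :=
    Module.Finite.iff_fg.2 (homogeneousSubmodule_fg _ _ _)
  have hker : LinearMap.ker (Φ.codRestrict _ hdeg) ≠ ⊥ := by
    apply LinearMap.ker_ne_bot_of_finrank_lt
    simp only [H, Module.finrank_prod, Module.finrank_pi_fintype, finrank_homogeneousSubmodule,
      Fintype.card_fin, multichoose_three, Finset.sum_const, Finset.card_univ, smul_eq_mul]
    nlinarith [two_mul_choose_two s, two_mul_choose_two (s + 1 + s)]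
  obtain ⟨p, hp, hp0⟩ := Submodule.exists_mem_ne_zero_of_ne_bot hker
  have hrel : W * p.1 = ∑ j, X j ^ (s + 1) * (p.2 j : MvPolynomial (Fin 3) K) :=
    sub_eq_zero.1 ((hΦ p).symm.trans (congrArg Subtype.val (LinearMap.mem_ker.1 hp)))
  refine ⟨p.1, fun j => p.2 j, fun hf => hp0 ?_, p.1.2, fun j => (p.2 j).2, hrel⟩
  rw [hf, mul_zero] at hrel
  exact Prod.ext (Subtype.ext hf) <| funext fun j => Subtype.ext <|
    eq_zero_of_sum_X_pow_mul_eq_zero (fun j => (p.2 j).2) hrel.symm j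

end Syzygies

namespace KMAlgebra

variable {K : Type*} [Field K]

lemma KMLsopIdealComponent_one (r : ℕ) :
    KMLsopIdealComponent K r 1 = Submodule.span K (Set.range fun j => KMTheta K j ^ r) := by
  have hone : KMGrading K (0 * r) = Submodule.span K {1} := by
    rw [KMGrading, zero_mul, homogeneousSubmodule_zero, Submodule.one_eq_span, Submodule.map_span,
      Set.image_singleton, AlgHom.toLinearMap_apply, map_one]
  simp only [KMLsopIdealComponent, hone, Submodule.map_span, Set.image_singleton,
    LinearMap.mulLeft_apply, mul_one, Submodule.span_range_eq_iSup]

lemma KMLsopIdealComponent_two (r : ℕ) :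
    KMLsopIdealComponent K r 2 =
      ⨆ j, (KMGrading K r).map (LinearMap.mulLeft K (KMTheta K j ^ r)) := by
  rw [KMLsopIdealComponent, one_mul]

lemma KMTheta_pow_mul_mem_KMLsopIdealComponent_two {r : ℕ} {a : KMAlgebra K}
    (ha : a ∈ KMGrading K r) (j : Fin 3) : KMTheta K j ^ r * a ∈ KMLsopIdealComponent K r 2 := by
  rw [KMLsopIdealComponent_two]
  exact Submodule.mem_iSup_of_mem j ⟨a, ha, rfl⟩

lemma snd_toDualNumber_of_mem_KMLsopIdealComponent_one {r : ℕ} {a : KMAlgebra K}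
    (ha : a ∈ KMLsopIdealComponent K r 1) : (toDualNumber K a).snd = 0 := by
  have hle : KMLsopIdealComponent K r 1 ≤ LinearMap.range (ofPoly K).toLinearMap := by
    rw [KMLsopIdealComponent_one, Submodule.span_le]
    exact Set.range_subset_iff.2 fun j => ⟨X j ^ r, by simp [ofPoly_X]⟩
  obtain ⟨f, rfl⟩ := hle ha
  exact congrArg TrivSqZeroExt.snd (toDualNumber_ofPoly K f)

lemma gen_zero_mul_ofPoly_mem_KMGrading {s : ℕ} {f : MvPolynomial (Fin 3) K}
    (hf : f.IsHomogeneous s) : gen K 0 * ofPoly K f ∈ KMGrading K (s + 1) :=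
  add_comm 1 s ▸ mul_mem_KMGrading K (gen_mem_KMGrading K 0) (ofPoly_mem_KMGrading K hf)

-- Since `x₁` kills `x₁, …, x₅`, multiplication by `w` on `x₁A` depends only on the image of `w` in
-- `K[x₆, x₇, x₈]`.
lemma exists_mul_mem_KMLsopIdealComponent_notMem {r : ℕ} (hr : 1 ≤ r) {w : KMAlgebra K}
    (hw : w ∈ KMGrading K r) :
    ∃ x ∈ KMGrading K r, w * x ∈ KMLsopIdealComponent K r 2 ∧ x ∉ KMLsopIdealComponent K r 1 := by
  obtain ⟨s, rfl⟩ := Nat.exists_eq_add_of_le' hr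
  obtain ⟨f, g, hf0, hf, hg, hfg⟩ := exists_mul_eq_sum_X_pow_mul (isHomogeneous_toPoly K hw)
  refine ⟨gen K 0 * ofPoly K f, gen_zero_mul_ofPoly_mem_KMGrading hf, ?_, fun hmem => hf0 ?_⟩
  · have hprod : w * (gen K 0 * ofPoly K f) =
        ∑ j, KMTheta K j ^ (s + 1) * (gen K 0 * ofPoly K (g j)) := calc
      w * (gen K 0 * ofPoly K f) = gen K 0 * w * ofPoly K f := by ring
      _ = gen K 0 * ofPoly K (toPoly K w * f) := by
        rw [← gen_zero_mul_ofPoly_toPoly, map_mul, mul_assoc]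
      _ = gen K 0 * ∑ j, KMTheta K j ^ (s + 1) * ofPoly K (g j) := by
        simp only [hfg, map_sum, map_mul, map_pow, ofPoly_X]
      _ = ∑ j, KMTheta K j ^ (s + 1) * (gen K 0 * ofPoly K (g j)) := by
        simp only [Finset.mul_sum, mul_left_comm]
    rw [hprod]
    exact Submodule.sum_mem _ fun j _ =>
      KMTheta_pow_mul_mem_KMLsopIdealComponent_two (gen_zero_mul_ofPoly_mem_KMGrading (hg j)) j
  · rw [← snd_toDualNumber_gen_zero_mul K f]
    exact snd_toDualNumber_of_mem_KMLsopIdealComponent_one hmem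

lemma finrank_KMLsopIdealComponent_one {r : ℕ} (hr : r ≠ 0) :
    Module.finrank K (KMLsopIdealComponent K r 1) = 3 := by
  have hpow : LinearIndependent K ((toPoly K).toLinearMap ∘ fun j => KMTheta K j ^ r) := by
    simpa [Function.comp_def, toPoly_KMTheta] using linearIndependent_X_pow (Fin 3) K hr
  rw [KMLsopIdealComponent_one, finrank_span_eq_card (hpow.of_comp _), Fintype.card_fin]

lemma finrank_KMLsopIdealComponent_two_le (r : ℕ) :
    Module.finrank K (KMLsopIdealComponent K r 2) ≤ 3 * Module.finrank K (KMGrading K r) := by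
  rw [KMLsopIdealComponent_two]
  calc _ ≤ ∑ j, Module.finrank K
        ((KMGrading K r).map (LinearMap.mulLeft K (KMTheta K j ^ r))) := finrank_iSup_le_sum _
    _ ≤ ∑ _j : Fin 3, Module.finrank K (KMGrading K r) :=
        Finset.sum_le_sum fun j _ => Submodule.finrank_map_le _ _
    _ = _ := by simp

lemma finrank_KMGrading_add (K : Type*) [Field K] {n : ℕ} (hn : n ≠ 0) :
    Module.finrank K (KMGrading K n) + n = 8 * n ^ 2 + 1 := by
  obtain rfl | hn' := eq_or_ne n 1
  · rw [finrank_KMGrading]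
    rfl
  obtain ⟨m, rfl⟩ := Nat.exists_eq_add_of_le' (show 2 ≤ n by omega)
  rw [finrank_KMGrading]
  nlinarith [two_mul_choose_two m, two_mul_choose_two (m + 1), two_mul_choose_two (m + 2)]

-- The count behind this: `dim (A_Θ^⟨r⟩)₁ = 8r² - r - 2 < 8r² + r - 2 ≤ dim (A_Θ^⟨r⟩)₂`.
lemma exists_forall_sub_mul_notMem_KMLsopIdealComponent {r : ℕ} (hr : 1 ≤ r) {w : KMAlgebra K}
    (hw : w ∈ KMGrading K r) :
    ∃ y ∈ KMGrading K (2 * r), ∀ x ∈ KMGrading K r, y - w * x ∉ KMLsopIdealComponent K r 2 := by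
  by_contra! hsurj
  have hfin : Module.Finite K (KMLsopIdealComponent K r 2) := by
    rw [KMLsopIdealComponent_two]
    infer_instance
  have hsub : KMLsopIdealComponent K r 1 ≤ KMGrading K r := by
    rw [KMLsopIdealComponent_one, Submodule.span_le]
    rintro _ ⟨j, rfl⟩
    change KMTheta K j ^ r ∈ KMGrading K r
    rw [← ofPoly_X, ← map_pow]
    exact ofPoly_mem_KMGrading K (isHomogeneous_X_pow j r)
  have hmul : (KMLsopIdealComponent K r 1).map (LinearMap.mulLeft K w) ≤
      KMLsopIdealComponent K r 2 := by
    rw [KMLsopIdealComponent_one, Submodule.map_span_le]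
    rintro _ ⟨j, rfl⟩
    rw [LinearMap.mulLeft_apply, mul_comm]
    exact KMTheta_pow_mul_mem_KMLsopIdealComponent_two hw j
  have hcover : KMGrading K (2 * r) ≤
      (KMGrading K r).map (LinearMap.mulLeft K w) ⊔ KMLsopIdealComponent K r 2 := by
    intro y hy
    obtain ⟨x, hx, hxy⟩ := hsurj y hy
    rw [← add_sub_cancel (w * x) y]
    exact Submodule.add_mem_sup ⟨x, hx, rfl⟩ hxy
  have hdim := finrank_add_finrank_le_of_le_map_sup _ hsub hmul hcover
  have hone := finrank_KMLsopIdealComponent_one (K := K) (r := r) (by omega)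
  have htwo := finrank_KMLsopIdealComponent_two_le (K := K) r
  have hr' := finrank_KMGrading_add K (n := r) (by omega)
  have h2r := finrank_KMGrading_add K (n := 2 * r) (by omega)
  nlinarith

end KMAlgebra

open KMAlgebra in
theorem KM_not_weak_Lefschetz_general (K : Type*) [Field K] :
    ringKrullDim (KMAlgebra K) = 3 ∧
    (∀ θ' : Fin 3 → KMAlgebra K, (∀ j, θ' j ∈ KMGrading K 1) →
      Module.Finite K (KMAlgebra K ⧸ Ideal.span (Set.range θ')) →
      RingTheory.Sequence.IsRegular (KMAlgebra K) (List.ofFn θ')) ∧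
    ((1 + 5 * Polynomial.X + 10 * Polynomial.X ^ 2 : Polynomial ℤ) : PowerSeries ℤ) =
      (PowerSeries.mk fun i => (Module.finrank K (KMGrading K i) : ℤ)) *
        (1 - PowerSeries.X) ^ 3 ∧
    (∀ j, KMTheta K j ∈ KMGrading K 1) ∧
    Module.Finite K (KMAlgebra K ⧸ Ideal.span (Set.range (KMTheta K))) ∧
    ∀ r : ℕ, 1 ≤ r →
      ¬ ∃ w ∈ KMGrading K r, ∀ i : ℕ,
        (∀ x ∈ KMGrading K (i * r),
          w * x ∈ KMLsopIdealComponent K r (i + 1) → x ∈ KMLsopIdealComponent K r i) ∨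
        (∀ y ∈ KMGrading K ((i + 1) * r), ∃ x ∈ KMGrading K (i * r),
          y - w * x ∈ KMLsopIdealComponent K r (i + 1)) := by
  refine ⟨ringKrullDim_eq_three K, fun _ => isRegular_of_finite_quotient, coe_hPolynomial_eq K,
    KMTheta_mem_KMGrading K, finite_quotient_span_range_KMTheta K, ?_⟩
  rintro r hr ⟨w, hw, hlef⟩
  have hlef1 := hlef 1
  rw [one_mul] at hlef1
  obtain hinj | hsurj := hlef1
  · obtain ⟨x, hx, hwx, hx1⟩ := exists_mul_mem_KMLsopIdealComponent_notMem hr hw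
    exact hx1 (hinj x hx hwx)
  · obtain ⟨y, hy, hne⟩ := exists_forall_sub_mul_notMem_KMLsopIdealComponent hr hw
    obtain ⟨x, hx, hmem⟩ := hsurj y hy
    exact hne x hx hmem

/-- **Remark 2.4, Kubitzke–Murai.**
Let `K` be a field of characteristic `0` and
`A = K[x₁,…,x₈]/((x₁²,x₁x₂,x₁x₃,x₁x₄,x₁x₅)+(x₂,x₃,x₄,x₅)³)`.  Then `A` is a Cohen-Macaulay
standard graded `K`-algebra of Krull dimension `3` (Cohen-Macaulayness being expressed by the
statement that every linear system of parameters is a regular sequence), its `h`-polynomial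
is `h_A(t) = 1 + 5t + 10t²`, the sequence `Θ = x₆,x₇,x₈` is an l.s.o.p. for `A`, and for
every `r ≥ 3` the algebra `A_Θ^⟨r⟩` does not have the weak Lefschetz property: there is no
linear form `w` (represented by an element of `A_r = (A^⟨r⟩)₁`) such that multiplication by
`w` from the degree-`i` to the degree-`(i+1)` component of `A_Θ^⟨r⟩` is injective or
surjective for every `i`. -/
theorem KM_not_weak_Lefschetz (K : Type*) [Field K] [CharZero K] :
    ringKrullDim (KMAlgebra K) = 3 ∧
    (∀ θ' : Fin 3 → KMAlgebra K, (∀ j, θ' j ∈ KMGrading K 1) →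
      Module.Finite K (KMAlgebra K ⧸ Ideal.span (Set.range θ')) →
      RingTheory.Sequence.IsRegular (KMAlgebra K) (List.ofFn θ')) ∧
    ((1 + 5 * Polynomial.X + 10 * Polynomial.X ^ 2 : Polynomial ℤ) : PowerSeries ℤ) =
      (PowerSeries.mk fun i => (Module.finrank K (KMGrading K i) : ℤ)) *
        (1 - PowerSeries.X) ^ 3 ∧
    (∀ j, KMTheta K j ∈ KMGrading K 1) ∧
    Module.Finite K (KMAlgebra K ⧸ Ideal.span (Set.range (KMTheta K))) ∧
    ∀ r : ℕ, 3 ≤ r →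
      ¬ ∃ w ∈ KMGrading K r, ∀ i : ℕ,
        (∀ x ∈ KMGrading K (i * r),
          w * x ∈ KMLsopIdealComponent K r (i + 1) → x ∈ KMLsopIdealComponent K r i) ∨
        (∀ y ∈ KMGrading K ((i + 1) * r), ∃ x ∈ KMGrading K (i * r),
          y - w * x ∈ KMLsopIdealComponent K r (i + 1)) := by
  obtain ⟨hdim, hCM, hh, hθ, hfin, hlef⟩ := KM_not_weak_Lefschetz_general K
  exact ⟨hdim, hCM, hh, hθ, hfin, fun r hr => hlef r (by omega)⟩
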